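/- Let n ≥ 3 be an integer, let η > 0 and β > 0. For each m ∈ (0, (n−2)/n), set α_m = 2β/(1−m) and let v^{(m)} be the radial solution of (E) on [0,∞) with parameters (m, α_m, β). Then the two iterated limits of r²·v^{(m)}(r)^{1−m}/log r agree: (i) for each m ∈ (0,(n−2)/n), L(m) := lim_{r→∞} r²·v^{(m)}(r)^{1−m}/log r exists, and lim_{m→0⁺} L(m) = 2(n−1)(n−2)/β; and (ii) for each r > 1, ℓ(r) := lim_{m→0⁺} r²·v^{(m)}(r)^{1−m}/log r exists, and lim_{r→∞} ℓ(r) = 2(n−1)(n−2)/β. -/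

import Mathlib

/-!
For a radial solution `v` put `y = (1 - m) log v` and `q = -r y'`. With `α = 2β/(1 - m)` the
equation becomes the first order system

  `r y' = -q`,  `r q' = -κ q + a q² + b r² eʸ (2 - q)`

with `κ = n - 2`, `a = m/(1 - m)`, `b = β/(n - 1)`, which stays regular as `m → 0`, and the quantity
of interest is `r² eʸ / log r`.

* A barrier argument gives `0 ≤ q ≤ 2`. Adding suitable multiples of `2 log r + y` and `log r` to
  `2 - q + b r² eʸ` produces one nonincreasing and one nondecreasing function of `r`, whence
  `b r² eʸ = 2 (κ - 2a) log r + O(√(r² eʸ))`. So `r² eʸ / log r` converges to `2 (κ - 2a) / b`,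
  uniformly over systems with bounded `y(0)`.
* At fixed `r`, a Gronwall estimate for the difference of two solutions shows that `y r` depends
  continuously on `(a, y(0))`, so `y r` converges as `m → 0`.

The uniform rate survives the limit `m → 0`, which identifies the second iterated limit with the
first.
-/

open Real Set Filter

/-- `v` is a radial solution of the elliptic equation
`((n-1)/m)·((v^m)'' + ((n-1)/r)(v^m)') + α v + β r v' = 0` on `[0, ∞)`
with `v > 0`, `v(0) = η`, `v'(0) = 0`. -/
def IsRadialSol (n : ℕ) (m α β η : ℝ) (v : ℝ → ℝ) : Prop :=
  (∀ r ∈ Set.Ici (0:ℝ), 0 < v r) ∧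
  ContinuousOn v (Set.Ici (0:ℝ)) ∧
  ContDiffOn ℝ 2 v (Set.Ioi (0:ℝ)) ∧
  HasDerivWithinAt v 0 (Set.Ici (0:ℝ)) 0 ∧
  v 0 = η ∧
  ∀ r ∈ Set.Ioi (0:ℝ),
    (((n : ℝ) - 1) / m) * (deriv (deriv (fun s => v s ^ m)) r
      + (((n : ℝ) - 1) / r) * deriv (fun s => v s ^ m) r)
    + α * v r + β * r * deriv v r = 0

open scoped Topology

section HalfLine

variable {f f' : ℝ → ℝ} {c : ℝ}

lemma monotoneOn_Ioi_of_hasDerivAt_nonneg (hf : ∀ x, c < x → HasDerivAt f (f' x) x)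
    (hf' : ∀ x, c < x → 0 ≤ f' x) : MonotoneOn f (Ioi c) := by
  refine monotoneOn_of_hasDerivWithinAt_nonneg (f' := f') (convex_Ioi c)
    (fun x hx => (hf x hx).continuousAt.continuousWithinAt) ?_ ?_ <;> rw [interior_Ioi]
  exacts [fun x hx => (hf x hx).hasDerivWithinAt, hf']

lemma antitoneOn_Ioi_of_hasDerivAt_nonpos (hf : ∀ x, c < x → HasDerivAt f (f' x) x)
    (hf' : ∀ x, c < x → f' x ≤ 0) : AntitoneOn f (Ioi c) := by
  refine antitoneOn_of_hasDerivWithinAt_nonpos (f' := f') (convex_Ioi c)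
    (fun x hx => (hf x hx).continuousAt.continuousWithinAt) ?_ ?_ <;> rw [interior_Ioi]
  exacts [fun x hx => (hf x hx).hasDerivWithinAt, hf']

lemma le_of_hasDerivAt_nonpos_of_tendsto_nhdsGT {l x : ℝ}
    (hf : ∀ x, c < x → HasDerivAt f (f' x) x) (hf' : ∀ x, c < x → f' x ≤ 0)
    (hl : Tendsto f (𝓝[>] c) (𝓝 l)) (hx : c < x) : f x ≤ l := by
  refine ge_of_tendsto hl ?_
  filter_upwards [Ioo_mem_nhdsGT hx] with z hz
  exact antitoneOn_Ioi_of_hasDerivAt_nonpos hf hf' hz.1 hx hz.2.le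

lemma le_of_frequently_le_of_barrier {M x : ℝ} (hf : ∀ x, c < x → HasDerivAt f (f' x) x)
    (hfreq : ∃ᶠ x in 𝓝[>] c, f x ≤ M) (hbarrier : ∀ x, c < x → f x = M → f' x < 0)
    (hx : c < x) : f x ≤ M := by
  obtain ⟨z, hfz, hcz, hzx⟩ := (hfreq.and_eventually (Ioo_mem_nhdsGT hx)).exists
  exact image_le_of_deriv_right_lt_deriv_boundary' (B := fun _ => M) (B' := fun _ => 0)
    (fun t ht => (hf t (hcz.trans_le ht.1)).continuousAt.continuousWithinAt)
    (fun t ht => (hf t (hcz.trans_le ht.1)).hasDerivWithinAt) hfz continuousOn_const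
    (fun t _ => hasDerivWithinAt_const t _ M) (fun t ht => hbarrier t (hcz.trans_le ht.1))
    (right_mem_Icc.2 hzx.le)

/- By the mean value theorem on `[r/2, r]`, some `x` there has
`|x f'(x)| ≤ 2 |f r - f (r/2)|`, which tends to `0`. -/
lemma frequently_abs_mul_deriv_lt {l ε : ℝ} (hf : ∀ x, 0 < x → HasDerivAt f (f' x) x)
    (hl : Tendsto f (𝓝[>] 0) (𝓝 l)) (hε : 0 < ε) : ∃ᶠ x in 𝓝[>] 0, |x * f' x| < ε := by
  rw [(nhdsGT_basis (0 : ℝ)).frequently_iff]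
  intro δ hδ
  have hhalf : Tendsto (fun r : ℝ => r / 2) (𝓝[>] 0) (𝓝[>] 0) := by
    refine tendsto_nhdsWithin_iff.2 ⟨?_, ?_⟩
    · simpa using ((continuous_id.div_const (2 : ℝ)).tendsto 0).mono_left nhdsWithin_le_nhds
    · filter_upwards [self_mem_nhdsWithin] with r hr using half_pos (mem_Ioi.1 hr)
  have hdiff : Tendsto (fun r => 2 * |f r - f (r / 2)|) (𝓝[>] 0) (𝓝 0) := by
    simpa using ((hl.sub (hl.comp hhalf)).abs).const_mul 2
  obtain ⟨r, hrε, hr0, hrδ⟩ :=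
    ((hdiff.eventually_lt_const hε).and (Ioo_mem_nhdsGT hδ)).exists
  have pos_of_ge : ∀ x, r / 2 ≤ x → 0 < x := fun x hx => (half_pos hr0).trans_le hx
  obtain ⟨x, hx, hslope⟩ := exists_hasDerivAt_eq_slope f f' (half_lt_self hr0)
    (fun x hx => (hf x (pos_of_ge x hx.1)).continuousAt.continuousWithinAt)
    (fun x hx => hf x (pos_of_ge x hx.1.le))
  have hx0 : 0 < x := pos_of_ge x hx.1.le
  refine ⟨x, ⟨hx0, hx.2.trans hrδ⟩, lt_of_le_of_lt ?_ hrε⟩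
  calc |x * f' x| = x / (r / 2) * |f r - f (r / 2)| := by
        rw [hslope, sub_half, mul_div_assoc', ← div_mul_eq_mul_div, abs_mul,
          abs_of_pos (div_pos hx0 (half_pos hr0))]
    _ ≤ 2 * |f r - f (r / 2)| := by
        gcongr
        rw [div_le_iff₀ (half_pos hr0)]
        linarith [hx.2]

lemma le_mul_exp_of_hasDerivAt_le {g g' : ℝ → ℝ} {l x : ℝ}
    (hf : ∀ x, c < x → HasDerivAt f (f' x) x) (hg : ∀ x, c < x → HasDerivAt g (g' x) x)
    (hfg : ∀ x, c < x → f' x ≤ g' x * f x) (hl : Tendsto f (𝓝[>] c) (𝓝 l))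
    (hg₀ : Tendsto g (𝓝[>] c) (𝓝 0)) (hx : c < x) : f x ≤ l * exp (g x) := by
  have hderiv : ∀ x, c < x →
      HasDerivAt (fun t => f t * exp (-g t)) ((f' x - g' x * f x) * exp (-g x)) x :=
    fun x hx => ((hf x hx).fun_mul (hg x hx).fun_neg.exp).congr_deriv (by ring)
  have hlim : Tendsto (fun t => f t * exp (-g t)) (𝓝[>] c) (𝓝 l) := by
    simpa using hl.mul ((continuous_exp.tendsto _).comp hg₀.neg)
  have hle : f x * exp (-g x) ≤ l := le_of_hasDerivAt_nonpos_of_tendsto_nhdsGT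
    (f := fun t => f t * exp (-g t)) hderiv
    (fun t ht => mul_nonpos_of_nonpos_of_nonneg (sub_nonpos.2 (hfg t ht)) (exp_pos _).le) hlim hx
  rwa [exp_neg, ← div_eq_mul_inv, div_le_iff₀ (exp_pos _)] at hle

lemma tendsto_const_mul_sq_nhdsGT_zero (k : ℝ) :
    Tendsto (fun x : ℝ => k * x ^ 2) (𝓝[>] 0) (𝓝 0) := by
  have : Continuous fun x : ℝ => k * x ^ 2 := by fun_prop
  simpa using (this.tendsto 0).mono_left nhdsWithin_le_nhds

end HalfLine

section RealInequalities

lemma abs_exp_sub_exp_le {x y N : ℝ} (hx : x ≤ N) (hy : y ≤ N) :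
    |exp x - exp y| ≤ exp N * |x - y| :=
  (convex_Iic N).norm_image_sub_le_of_norm_deriv_le (fun _ _ => differentiableAt_exp)
    (fun t ht => by rw [Real.deriv_exp, norm_eq_abs, abs_exp]; exact exp_le_exp.2 ht) hy hx

lemma le_one_add_div_of_mul_sq_le {b s A d : ℝ} (hb : 0 < b) (hA : 0 ≤ A) (hd : 0 ≤ d)
    (h : b * s ^ 2 ≤ A + d * s) : s ≤ 1 + (A + d) / b := by
  rcases le_total s 1 with hs | hs
  · have : 0 ≤ (A + d) / b := by positivity
    linarith
  · have hA_le : A ≤ A * s := le_mul_of_one_le_right hA hs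
    have : s ≤ (A + d) / b := by
      rw [le_div_iff₀ hb]
      nlinarith
    linarith

/- The substitution `s = √(W / L)` turns the hypothesis into `|b s² - c| ≤ (C + d s) / √L`, which
first bounds `s` and then gives the rate. -/
lemma abs_div_sub_div_le_of_abs_mul_sub_le {b c c₀ C d L W : ℝ} (hb : 0 < b) (hC : 0 ≤ C)
    (hd : 0 ≤ d) (hL : 1 ≤ L) (hW : 0 ≤ W) (hc₀ : 0 ≤ c₀) (hc : c ≤ c₀)
    (h : |b * W - c * L| ≤ C + d * √W) :
    |W / L - c / b| ≤ (C + d * (1 + (c₀ + C + d) / b)) / b / √L := by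
  have hL0 : 0 < L := by linarith
  have hsqrtL : 1 ≤ √L := one_le_sqrt.2 hL
  obtain ⟨s, hs, rfl⟩ : ∃ s, 0 ≤ s ∧ W = s ^ 2 * L :=
    ⟨√(W / L), sqrt_nonneg _, by rw [sq_sqrt (by positivity)]; field_simp⟩
  have hsqrtW : √(s ^ 2 * L) = s * √L := by rw [sqrt_mul (sq_nonneg s), sqrt_sq hs]
  have hrate : |b * s ^ 2 - c| ≤ (C + d * s) / √L := by
    rw [le_div_iff₀ (by linarith)]
    refine le_of_mul_le_mul_right ?_ (by linarith : 0 < √L)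
    calc |b * s ^ 2 - c| * √L * √L = |b * (s ^ 2 * L) - c * L| := by
          rw [mul_assoc, mul_self_sqrt hL0.le, ← abs_of_pos hL0, ← abs_mul, abs_of_pos hL0]
          ring_nf
      _ ≤ C + d * (s * √L) := hsqrtW ▸ h
      _ ≤ (C + d * s) * √L := by nlinarith
  have hs_le : s ≤ 1 + (c₀ + C + d) / b := by
    refine le_one_add_div_of_mul_sq_le hb (by positivity) hd ?_
    have : (C + d * s) / √L ≤ C + d * s := div_le_self (by positivity) hsqrtL
    linarith [le_of_abs_le hrate]
  have hquot : s ^ 2 * L / L - c / b = (b * s ^ 2 - c) / b := by field_simp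
  rw [hquot, abs_div, abs_of_pos hb, div_right_comm]
  gcongr
  exact hrate.trans (by gcongr)

end RealInequalities

lemma exists_tendsto_of_tendsto_dist {ι α : Type*} [PseudoMetricSpace α] [CompleteSpace α]
    {l : Filter ι} [l.NeBot] {f : ι → α}
    (h : Tendsto (fun p : ι × ι => dist (f p.1) (f p.2)) (l ×ˢ l) (𝓝 0)) :
    ∃ x, Tendsto f l (𝓝 x) := by
  rw [← cauchy_map_iff_exists_tendsto, cauchy_map_iff', Metric.uniformity_eq_comap_nhds_zero]
  exact tendsto_comap_iff.2 h

/-- The nonlinearity of the system for `y = (1 - m) log v` and `q = -r y'`, as a function of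
`(r, y, q)`. The parameters are `a = m/(1 - m)` and `b = β/(n - 1)`. -/
noncomputable def forcing (a b r y q : ℝ) : ℝ :=
  a * q ^ 2 + b * r ^ 2 * exp y * (2 - q)

/-- The radial equation with `α = 2β/(1 - m)` as a first order system on `(0, ∞)` for
`y = (1 - m) log v` and `q = -r y'`, with `κ` standing for `n - 2`, `y₀` for `(1 - m) log η` and
`a`, `b` as in `forcing`. The bound `2a < κ` is the condition `m < (n - 2)/n`. -/
structure LogRadialSystem (κ a b y₀ : ℝ) (y q : ℝ → ℝ) : Prop where
  a_nonneg : 0 ≤ a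
  two_mul_a_lt : 2 * a < κ
  b_pos : 0 < b
  hasDerivAt_y : ∀ r, 0 < r → HasDerivAt y (-q r / r) r
  hasDerivAt_q : ∀ r, 0 < r → HasDerivAt q ((-κ * q r + forcing a b r (y r) (q r)) / r) r
  tendsto_y : Tendsto y (𝓝[>] 0) (𝓝 y₀)

lemma abs_forcing_sub_le {κ b N r a₁ a₂ y₁ y₂ q₁ q₂ : ℝ} (hb : 0 ≤ b) (ha₂ : 0 ≤ a₂)
    (ha₂κ : 2 * a₂ ≤ κ) (hy₁ : y₁ ≤ N) (hy₂ : y₂ ≤ N) (hq₁ : q₁ ∈ Icc 0 2) (hq₂ : 0 ≤ q₂)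
    (hq₁r : q₁ ≤ b * exp N * r ^ 2) (hq₂r : q₂ ≤ b * exp N * r ^ 2) :
    |forcing a₁ b r y₁ q₁ - forcing a₂ b r y₂ q₂| ≤
      b * exp N * r ^ 2 * (2 * |a₁ - a₂| + (κ + 1) * |q₁ - q₂| + 2 * |y₁ - y₂|) := by
  obtain ⟨hq₁0, hq₁2⟩ := hq₁
  set G := b * exp N * r ^ 2 with hG
  have hdecomp : forcing a₁ b r y₁ q₁ - forcing a₂ b r y₂ q₂ =
      (a₁ - a₂) * q₁ ^ 2 + a₂ * (q₁ + q₂) * (q₁ - q₂) +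
        b * r ^ 2 * (2 - q₁) * (exp y₁ - exp y₂) - b * r ^ 2 * exp y₂ * (q₁ - q₂) := by
    simp only [forcing]; ring
  have ha_term : |(a₁ - a₂) * q₁ ^ 2| ≤ |a₁ - a₂| * (2 * G) := by
    rw [abs_mul, abs_of_nonneg (sq_nonneg q₁)]
    gcongr
    nlinarith
  have hsq_term : |a₂ * (q₁ + q₂) * (q₁ - q₂)| ≤ κ * G * |q₁ - q₂| := by
    rw [abs_mul, abs_of_nonneg (by positivity)]
    refine mul_le_mul_of_nonneg_right ?_ (abs_nonneg _)
    calc a₂ * (q₁ + q₂) ≤ κ / 2 * (G + G) := by gcongr <;> linarith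
      _ = κ * G := by ring
  have hy_term : |b * r ^ 2 * (2 - q₁) * (exp y₁ - exp y₂)| ≤ G * (2 * |y₁ - y₂|) := by
    rw [abs_mul, abs_of_nonneg (mul_nonneg (by positivity) (sub_nonneg.2 hq₁2))]
    calc b * r ^ 2 * (2 - q₁) * |exp y₁ - exp y₂|
        ≤ b * r ^ 2 * 2 * (exp N * |y₁ - y₂|) := by
          gcongr
          · linarith
          · exact abs_exp_sub_exp_le hy₁ hy₂
      _ = G * (2 * |y₁ - y₂|) := by rw [hG]; ring
  have hq_term : |b * r ^ 2 * exp y₂ * (q₁ - q₂)| ≤ G * |q₁ - q₂| := by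
    rw [abs_mul, abs_of_nonneg (by positivity), hG, mul_right_comm b]
    gcongr
  rw [hdecomp]
  refine (abs_sub _ _).trans ?_
  linarith [abs_add_three ((a₁ - a₂) * q₁ ^ 2) (a₂ * (q₁ + q₂) * (q₁ - q₂))
    (b * r ^ 2 * (2 - q₁) * (exp y₁ - exp y₂))]

namespace LogRadialSystem

section Bounds

variable {κ a b y₀ r : ℝ} {y q : ℝ → ℝ}

lemma κ_pos (S : LogRadialSystem κ a b y₀ y q) : 0 < κ := by
  linarith [S.a_nonneg, S.two_mul_a_lt]

lemma frequently_abs_q_lt (S : LogRadialSystem κ a b y₀ y q) {ε : ℝ} (hε : 0 < ε) :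
    ∃ᶠ x in 𝓝[>] 0, |q x| < ε := by
  refine ((frequently_abs_mul_deriv_lt S.hasDerivAt_y S.tendsto_y hε).and_eventually
    self_mem_nhdsWithin).mono fun x hx => ?_
  obtain ⟨hlt, hx0⟩ := hx
  rwa [mul_div_cancel₀ _ (ne_of_gt hx0), abs_neg] at hlt

lemma q_nonneg (S : LogRadialSystem κ a b y₀ y q) (hr : 0 < r) : 0 ≤ q r := by
  refine le_of_forall_pos_le_add fun ε hε => ?_
  have hneg : -q r ≤ ε := by
    refine le_of_frequently_le_of_barrier (f := fun x => -q x)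
      (fun x hx => (S.hasDerivAt_q x hx).fun_neg)
      ((S.frequently_abs_q_lt hε).mono fun x hx => (neg_le_abs _).trans hx.le)
      (fun x hx hqx => ?_) hr
    obtain rfl : ε = -q x := hqx.symm
    have hκ := S.κ_pos
    have ha := S.a_nonneg
    have hb := S.b_pos
    have hq : 0 < 2 - q x := by linarith
    have hκq : 0 < -κ * q x := by nlinarith
    rw [neg_lt_zero, forcing]
    positivity
  linarith

lemma q_le_two (S : LogRadialSystem κ a b y₀ y q) (hr : 0 < r) : q r ≤ 2 := by
  refine le_of_frequently_le_of_barrier S.hasDerivAt_q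
    ((S.frequently_abs_q_lt two_pos).mono fun x hx => (le_abs_self _).trans hx.le)
    (fun x hx hqx => div_neg_of_neg_of_pos ?_ hx) hr
  rw [forcing, hqx]
  linarith [S.two_mul_a_lt]

lemma y_le (S : LogRadialSystem κ a b y₀ y q) (hr : 0 < r) : y r ≤ y₀ :=
  le_of_hasDerivAt_nonpos_of_tendsto_nhdsGT S.hasDerivAt_y
    (fun _ hx => div_nonpos_of_nonpos_of_nonneg (neg_nonpos.2 (S.q_nonneg hx)) hx.le)
    S.tendsto_y hr

lemma q_le_mul_sq (S : LogRadialSystem κ a b y₀ y q) (hr : 0 < r) :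
    q r ≤ b * exp y₀ * r ^ 2 := by
  have hb := S.b_pos
  refine le_of_forall_pos_le_add fun ε hε => ?_
  have hsub : q r - b * exp y₀ * r ^ 2 ≤ ε := by
    refine le_of_frequently_le_of_barrier (f := fun x => q x - b * exp y₀ * x ^ 2)
      (fun x hx => (S.hasDerivAt_q x hx).fun_sub ((hasDerivAt_pow 2 x).const_mul _))
      ((S.frequently_abs_q_lt hε).mono fun x hx => ?_) (fun x hx hqx => ?_) hr
    · have : 0 ≤ b * exp y₀ * x ^ 2 := by positivity
      linarith [le_of_abs_le hx.le]
    · have hq : 0 < q x := by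
        have : 0 ≤ b * exp y₀ * x ^ 2 := by positivity
        linarith
      have haq : a * q x < κ := by nlinarith [S.q_le_two hx, S.a_nonneg, S.two_mul_a_lt]
      have hexp : b * x ^ 2 * exp (y x) ≤ b * x ^ 2 * exp y₀ := by
        gcongr
        exact S.y_le hx
      have hqexp : 0 < b * x ^ 2 * exp (y x) * q x := by positivity
      push_cast
      rw [sub_neg, div_lt_iff₀ hx, forcing]
      nlinarith
  linarith

lemma tendsto_q (S : LogRadialSystem κ a b y₀ y q) : Tendsto q (𝓝[>] 0) (𝓝 0) := by
  refine tendsto_of_tendsto_of_tendsto_of_le_of_le' tendsto_const_nhds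
    (tendsto_const_mul_sq_nhdsGT_zero (b * exp y₀)) ?_ ?_
  · filter_upwards [self_mem_nhdsWithin] with x hx using S.q_nonneg hx
  · filter_upwards [self_mem_nhdsWithin] with x hx using S.q_le_mul_sq hx

lemma sub_le_y (S : LogRadialSystem κ a b y₀ y q) (hr : 0 < r) :
    y₀ - b * exp y₀ / 2 * r ^ 2 ≤ y r := by
  have hlim : Tendsto (fun x => -y x - b * exp y₀ / 2 * x ^ 2) (𝓝[>] 0) (𝓝 (-y₀)) := by
    simpa using S.tendsto_y.neg.sub (tendsto_const_mul_sq_nhdsGT_zero (b * exp y₀ / 2))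
  have hle : -y r - b * exp y₀ / 2 * r ^ 2 ≤ -y₀ := by
    refine le_of_hasDerivAt_nonpos_of_tendsto_nhdsGT
      (f := fun x => -y x - b * exp y₀ / 2 * x ^ 2)
      (fun x hx => (S.hasDerivAt_y x hx).fun_neg.fun_sub ((hasDerivAt_pow 2 x).const_mul _))
      (fun x hx => ?_) hlim hr
    have hq : q x / x ≤ b * exp y₀ * x := by
      rw [div_le_iff₀ hx]
      linarith [S.q_le_mul_sq hx]
    push_cast
    rw [neg_div, neg_neg]
    linarith
  linarith

lemma abs_y_one_le (S : LogRadialSystem κ a b y₀ y q) {N : ℝ} (hN : |y₀| ≤ N) :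
    |y 1| ≤ N + b * exp N := by
  have hexp : b * exp y₀ ≤ b * exp N := by
    have := S.b_pos
    gcongr
    exact le_of_abs_le hN
  have hexp_pos : 0 < b * exp y₀ := mul_pos S.b_pos (exp_pos _)
  have hlower := S.sub_le_y one_pos
  have hupper := S.y_le one_pos
  rw [abs_le] at hN ⊢
  constructor <;> linarith

end Bounds

/-- The functional `2 - q + b r² eʸ + k (2 log r + y) - 2 (κ - 2a) log r`, used for the two values
of `k` that make it monotone. -/
noncomputable def lyapunov (κ a b k : ℝ) (y q : ℝ → ℝ) (r : ℝ) : ℝ :=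
  2 - q r + b * (r ^ 2 * exp (y r)) + k * (2 * log r + y r) - 2 * (κ - 2 * a) * log r

section Asymptotics

variable {κ a b y₀ : ℝ} {y q : ℝ → ℝ}

lemma hasDerivAt_two_mul_log_add (S : LogRadialSystem κ a b y₀ y q) {r : ℝ} (hr : 0 < r) :
    HasDerivAt (fun r => 2 * log r + y r) ((2 - q r) / r) r :=
  (((hasDerivAt_log hr.ne').const_mul 2).fun_add (S.hasDerivAt_y r hr)).congr_deriv (by ring)

lemma monotoneOn_two_mul_log_add (S : LogRadialSystem κ a b y₀ y q) :
    MonotoneOn (fun r => 2 * log r + y r) (Ioi 0) :=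
  monotoneOn_Ioi_of_hasDerivAt_nonneg (fun _ hr => S.hasDerivAt_two_mul_log_add hr)
    (fun _ hr => div_nonneg (sub_nonneg.2 (S.q_le_two hr)) hr.le)

lemma hasDerivAt_lyapunov (S : LogRadialSystem κ a b y₀ y q) (k : ℝ) {r : ℝ} (hr : 0 < r) :
    HasDerivAt (lyapunov κ a b k y q)
      ((κ * q r - a * q r ^ 2 + k * (2 - q r) - 2 * (κ - 2 * a)) / r) r := by
  have hW : HasDerivAt (fun r => b * (r ^ 2 * exp (y r)))
      (b * r ^ 2 * exp (y r) * (2 - q r) / r) r :=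
    (((hasDerivAt_pow 2 r).fun_mul (S.hasDerivAt_y r hr).exp).const_mul b).congr_deriv (by
      field_simp; ring)
  refine (((((S.hasDerivAt_q r hr).const_sub 2).fun_add hW).fun_add
    ((S.hasDerivAt_two_mul_log_add hr).const_mul k)).fun_sub
    ((hasDerivAt_log hr.ne').const_mul (2 * (κ - 2 * a)))).congr_deriv ?_
  rw [forcing]
  ring

lemma antitoneOn_lyapunov (S : LogRadialSystem κ a b y₀ y q) :
    AntitoneOn (lyapunov κ a b (κ - 4 * a) y q) (Ioi 0) := by
  refine antitoneOn_Ioi_of_hasDerivAt_nonpos (fun _ hr => S.hasDerivAt_lyapunov _ hr)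
    fun r hr => div_nonpos_of_nonpos_of_nonneg ?_ hr.le
  calc κ * q r - a * q r ^ 2 + (κ - 4 * a) * (2 - q r) - 2 * (κ - 2 * a)
      = -(a * (2 - q r) ^ 2) := by ring
    _ ≤ 0 := neg_nonpos.2 (mul_nonneg S.a_nonneg (sq_nonneg _))

lemma monotoneOn_lyapunov (S : LogRadialSystem κ a b y₀ y q) :
    MonotoneOn (lyapunov κ a b (κ - 2 * a) y q) (Ioi 0) := by
  refine monotoneOn_Ioi_of_hasDerivAt_nonneg (fun _ hr => S.hasDerivAt_lyapunov _ hr)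
    fun r hr => div_nonneg ?_ hr.le
  calc 0 ≤ a * (q r * (2 - q r)) :=
        mul_nonneg S.a_nonneg (mul_nonneg (S.q_nonneg hr) (sub_nonneg.2 (S.q_le_two hr)))
    _ = κ * q r - a * q r ^ 2 + (κ - 2 * a) * (2 - q r) - 2 * (κ - 2 * a) := by ring

lemma abs_two_mul_log_add_le (S : LogRadialSystem κ a b y₀ y q) {r : ℝ} (hr : 1 ≤ r) :
    |2 * log r + y r| ≤ |y 1| + 2 * √(r ^ 2 * exp (y r)) := by
  have hr0 : 0 < r := by linarith
  have hlower : y 1 ≤ 2 * log r + y r := by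
    simpa using S.monotoneOn_two_mul_log_add (mem_Ioi.2 one_pos) hr0 hr
  have hsqrt : √(r ^ 2 * exp (y r)) = exp (log r + y r / 2) := by
    rw [sqrt_mul (sq_nonneg r), sqrt_sq hr0.le, exp_add, exp_log hr0, exp_half]
  have hupper : 2 * log r + y r ≤ 2 * √(r ^ 2 * exp (y r)) := by
    rw [hsqrt]
    linarith [add_one_le_exp (log r + y r / 2)]
  have := sqrt_nonneg (r ^ 2 * exp (y r))
  rw [abs_le]
  constructor <;> linarith [neg_abs_le (y 1), abs_nonneg (y 1)]

lemma abs_mul_sub_mul_log_le (S : LogRadialSystem κ a b y₀ y q) {B r : ℝ} (hB : |y 1| ≤ B)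
    (hr : 1 ≤ r) :
    |b * (r ^ 2 * exp (y r)) - 2 * (κ - 2 * a) * log r| ≤
      2 + b * exp B + 2 * κ * B + 2 * κ * √(r ^ 2 * exp (y r)) := by
  have hr0 : 0 < r := by linarith
  have ha := S.a_nonneg
  have haκ := S.two_mul_a_lt
  have hκ := S.κ_pos
  have hb := S.b_pos
  have hupper := S.antitoneOn_lyapunov (mem_Ioi.2 one_pos) hr0 hr
  have hlower := S.monotoneOn_lyapunov (mem_Ioi.2 one_pos) hr0 hr
  simp only [lyapunov, log_one, mul_zero, zero_add, one_pow, one_mul, sub_zero] at hupper hlower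
  set X := 2 * log r + y r
  have hX : κ * |X| ≤ κ * (B + 2 * √(r ^ 2 * exp (y r))) := by
    gcongr
    exact (S.abs_two_mul_log_add_le hr).trans (by gcongr)
  have hy : κ * |y 1| ≤ κ * B := by gcongr
  have hexp : b * exp (y 1) ≤ b * exp B := by
    gcongr
    exact le_of_abs_le hB
  have hexp_pos : 0 < b * exp (y 1) := by positivity
  have abs_mul_le : ∀ k z : ℝ, |k| ≤ κ → |k * z| ≤ κ * |z| := fun k z hk => by
    rw [abs_mul]; gcongr
  have hk₁ : |κ - 4 * a| ≤ κ := by rw [abs_le]; constructor <;> linarith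
  have hk₂ : |κ - 2 * a| ≤ κ := by rw [abs_le]; constructor <;> linarith
  have hX₁ := abs_le.1 (abs_mul_le _ X hk₁)
  have hX₂ := abs_le.1 (abs_mul_le _ X hk₂)
  have hy₁ := abs_le.1 (abs_mul_le _ (y 1) hk₁)
  have hy₂ := abs_le.1 (abs_mul_le _ (y 1) hk₂)
  have hq_bounds := And.intro (S.q_nonneg hr0) (S.q_le_two hr0)
  have hq_one_bounds := And.intro (S.q_nonneg one_pos) (S.q_le_two one_pos)
  rw [abs_le]
  constructor <;> linarith

theorem exists_abs_div_log_sub_le (κ b N : ℝ) :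
    ∃ K, ∀ (a y₀ : ℝ) (y q : ℝ → ℝ), LogRadialSystem κ a b y₀ y q → |y₀| ≤ N →
      ∀ r, exp 1 ≤ r →
        |r ^ 2 * exp (y r) / log r - 2 * (κ - 2 * a) / b| ≤ K / √(log r) := by
  set B := N + b * exp N
  set C := 2 + b * exp B + 2 * κ * B
  refine ⟨(C + 2 * κ * (1 + (2 * κ + C + 2 * κ) / b)) / b, fun a y₀ y q S hy₀ r hr => ?_⟩
  have hκ := S.κ_pos
  have hb := S.b_pos
  have hB : |y 1| ≤ B := S.abs_y_one_le hy₀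
  have hC : 0 ≤ C := by
    have : 0 ≤ B := (abs_nonneg _).trans hB
    positivity
  have hr1 : 1 ≤ r := (one_le_exp zero_le_one).trans hr
  have hlog : 1 ≤ log r := (le_log_iff_exp_le (by linarith)).2 hr
  exact abs_div_sub_div_le_of_abs_mul_sub_le hb hC (by linarith) hlog (by positivity)
    (by linarith) (by linarith [S.a_nonneg]) (S.abs_mul_sub_mul_log_le hB hr1)

end Asymptotics

section Comparison

variable {κ b a₁ a₂ u₁ u₂ N : ℝ} {y₁ q₁ y₂ q₂ : ℝ → ℝ}

/-- The Gronwall functional for two solutions. The combination `κ y - q` is used because its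
derivative `-forcing / r` has lost the term that is singular at `r = 0`. -/
def energy (κ a₁ a₂ : ℝ) (y₁ q₁ y₂ q₂ : ℝ → ℝ) (r : ℝ) : ℝ :=
  (κ * (y₁ r - y₂ r) - (q₁ r - q₂ r)) ^ 2 + (q₁ r - q₂ r) ^ 2 + (a₁ - a₂) ^ 2

lemma tendsto_energy (S₁ : LogRadialSystem κ a₁ b u₁ y₁ q₁)
    (S₂ : LogRadialSystem κ a₂ b u₂ y₂ q₂) :
    Tendsto (energy κ a₁ a₂ y₁ q₁ y₂ q₂) (𝓝[>] 0)
      (𝓝 ((κ * (u₁ - u₂)) ^ 2 + (a₁ - a₂) ^ 2)) := by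
  have hq := S₁.tendsto_q.sub S₂.tendsto_q
  have hy := (S₁.tendsto_y.sub S₂.tendsto_y).const_mul κ
  unfold energy
  simpa using (((hy.sub hq).pow 2).add (hq.pow 2)).add_const ((a₁ - a₂) ^ 2)

lemma hasDerivAt_energy (S₁ : LogRadialSystem κ a₁ b u₁ y₁ q₁)
    (S₂ : LogRadialSystem κ a₂ b u₂ y₂ q₂) {r : ℝ} (hr : 0 < r) :
    HasDerivAt (energy κ a₁ a₂ y₁ q₁ y₂ q₂)
      (2 / r * ((forcing a₁ b r (y₁ r) (q₁ r) - forcing a₂ b r (y₂ r) (q₂ r)) *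
        ((q₁ r - q₂ r) - (κ * (y₁ r - y₂ r) - (q₁ r - q₂ r))) - κ * (q₁ r - q₂ r) ^ 2)) r := by
  have hq := (S₁.hasDerivAt_q r hr).fun_sub (S₂.hasDerivAt_q r hr)
  have hy := ((S₁.hasDerivAt_y r hr).fun_sub (S₂.hasDerivAt_y r hr)).const_mul κ
  refine ((((hy.fun_sub hq).fun_pow 2).fun_add (hq.fun_pow 2)).add_const
    ((a₁ - a₂) ^ 2)).congr_deriv ?_
  push_cast
  ring

lemma abs_forcing_sub_forcing_le (S₁ : LogRadialSystem κ a₁ b u₁ y₁ q₁)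
    (S₂ : LogRadialSystem κ a₂ b u₂ y₂ q₂) (hu₁ : u₁ ≤ N) (hu₂ : u₂ ≤ N) {r : ℝ} (hr : 0 < r) :
    |forcing a₁ b r (y₁ r) (q₁ r) - forcing a₂ b r (y₂ r) (q₂ r)| ≤
      b * exp N * (κ + 2 + 2 / κ) * r ^ 2 *
        (|a₁ - a₂| + |κ * (y₁ r - y₂ r) - (q₁ r - q₂ r)| + |q₁ r - q₂ r|) := by
  have hκ := S₁.κ_pos
  have hb := S₁.b_pos
  set Z := κ * (y₁ r - y₂ r) - (q₁ r - q₂ r) with hZ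
  set Q := q₁ r - q₂ r
  have hY : |y₁ r - y₂ r| ≤ (|Z| + |Q|) / κ := by
    rw [le_div_iff₀' hκ]
    calc κ * |y₁ r - y₂ r| = |κ * (y₁ r - y₂ r)| := by rw [abs_mul, abs_of_pos hκ]
      _ = |Z + Q| := by rw [hZ, sub_add_cancel]
      _ ≤ |Z| + |Q| := abs_add_le Z Q
  have hq_bound : ∀ {a u y q}, LogRadialSystem κ a b u y q → u ≤ N →
      q r ≤ b * exp N * r ^ 2 := fun S hu => (S.q_le_mul_sq hr).trans (by gcongr)
  calc _ ≤ b * exp N * r ^ 2 * (2 * |a₁ - a₂| + (κ + 1) * |Q| + 2 * |y₁ r - y₂ r|) :=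
        abs_forcing_sub_le hb.le S₂.a_nonneg S₂.two_mul_a_lt.le ((S₁.y_le hr).trans hu₁)
          ((S₂.y_le hr).trans hu₂) ⟨S₁.q_nonneg hr, S₁.q_le_two hr⟩ (S₂.q_nonneg hr)
          (hq_bound S₁ hu₁) (hq_bound S₂ hu₂)
    _ ≤ b * exp N * r ^ 2 * ((κ + 2 + 2 / κ) * (|a₁ - a₂| + |Z| + |Q|)) := by
        gcongr
        have hY' : 2 * |y₁ r - y₂ r| ≤ 2 / κ * (|Z| + |Q|) := by
          rw [div_mul_eq_mul_div, mul_div_assoc]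
          gcongr
        have ha : 0 ≤ (κ + 2 / κ) * |a₁ - a₂| := by positivity
        have hZ' : 0 ≤ (κ + 2) * |Z| := by positivity
        linarith [abs_nonneg Q]
    _ = _ := by ring

lemma deriv_energy_le (S₁ : LogRadialSystem κ a₁ b u₁ y₁ q₁)
    (S₂ : LogRadialSystem κ a₂ b u₂ y₂ q₂) (hu₁ : u₁ ≤ N) (hu₂ : u₂ ≤ N) {r : ℝ} (hr : 0 < r) :
    2 / r * ((forcing a₁ b r (y₁ r) (q₁ r) - forcing a₂ b r (y₂ r) (q₂ r)) *
        ((q₁ r - q₂ r) - (κ * (y₁ r - y₂ r) - (q₁ r - q₂ r))) - κ * (q₁ r - q₂ r) ^ 2) ≤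
      8 * (b * exp N * (κ + 2 + 2 / κ)) * r * energy κ a₁ a₂ y₁ q₁ y₂ q₂ r := by
  have hκ := S₁.κ_pos
  have hb := S₁.b_pos
  have hT := S₁.abs_forcing_sub_forcing_le S₂ hu₁ hu₂ hr
  rw [energy]
  set C := b * exp N * (κ + 2 + 2 / κ)
  set T := forcing a₁ b r (y₁ r) (q₁ r) - forcing a₂ b r (y₂ r) (q₂ r)
  set Z := κ * (y₁ r - y₂ r) - (q₁ r - q₂ r)
  set Q := q₁ r - q₂ r
  have hTQZ : T * (Q - Z) ≤ C * r ^ 2 * (4 * (Z ^ 2 + Q ^ 2 + (a₁ - a₂) ^ 2)) := by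
    calc T * (Q - Z) ≤ |T| * |Q - Z| := (le_abs_self _).trans (abs_mul _ _).le
      _ ≤ C * r ^ 2 * (|a₁ - a₂| + |Z| + |Q|) * (|Z| + |Q|) := by
        gcongr
        exact (abs_sub _ _).trans_eq (add_comm _ _)
      _ ≤ C * r ^ 2 * (4 * (Z ^ 2 + Q ^ 2 + (a₁ - a₂) ^ 2)) := by
        rw [mul_assoc, ← sq_abs Z, ← sq_abs Q, ← sq_abs (a₁ - a₂)]
        refine mul_le_mul_of_nonneg_left ?_ (by positivity)
        nlinarith [sq_nonneg (|Z| - |Q|), sq_nonneg (|a₁ - a₂| - (|Z| + |Q|)),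
          sq_nonneg |a₁ - a₂|, sq_nonneg |Z|, sq_nonneg |Q|]
  have hκQ : 0 ≤ κ * Q ^ 2 := by positivity
  calc 2 / r * (T * (Q - Z) - κ * Q ^ 2)
      ≤ 2 / r * (C * r ^ 2 * (4 * (Z ^ 2 + Q ^ 2 + (a₁ - a₂) ^ 2))) := by
        gcongr
        linarith
    _ = 8 * C * r * (Z ^ 2 + Q ^ 2 + (a₁ - a₂) ^ 2) := by
        field_simp
        ring

theorem sq_mul_sub_le (S₁ : LogRadialSystem κ a₁ b u₁ y₁ q₁)
    (S₂ : LogRadialSystem κ a₂ b u₂ y₂ q₂) (hu₁ : u₁ ≤ N) (hu₂ : u₂ ≤ N) {r : ℝ} (hr : 0 < r) :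
    (κ * (y₁ r - y₂ r)) ^ 2 ≤ 2 * (((κ * (u₁ - u₂)) ^ 2 + (a₁ - a₂) ^ 2) *
      exp (4 * (b * exp N * (κ + 2 + 2 / κ)) * r ^ 2)) := by
  set C := b * exp N * (κ + 2 + 2 / κ)
  have hderiv : ∀ x : ℝ, 0 < x → HasDerivAt (fun x => 4 * C * x ^ 2) (8 * C * x) x :=
    fun x _ => ((hasDerivAt_pow 2 x).const_mul (4 * C)).congr_deriv (by push_cast; ring)
  have henergy := le_mul_exp_of_hasDerivAt_le (fun _ hx => S₁.hasDerivAt_energy S₂ hx) hderiv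
    (fun _ hx => S₁.deriv_energy_le S₂ hu₁ hu₂ hx) (S₁.tendsto_energy S₂)
    (tendsto_const_mul_sq_nhdsGT_zero (4 * C)) hr
  rw [energy] at henergy
  nlinarith [sq_nonneg (κ * (y₁ r - y₂ r) - 2 * (q₁ r - q₂ r)), sq_nonneg (a₁ - a₂)]

end Comparison

section Family

variable {ι : Type*} {l : Filter ι} [l.NeBot] {κ b a' u : ℝ} {a y₀ : ι → ℝ} {y q : ι → ℝ → ℝ}

theorem exists_tendsto_apply
    (hS : ∀ᶠ i in l, LogRadialSystem κ (a i) b (y₀ i) (y i) (q i))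
    (ha : Tendsto a l (𝓝 a')) (hy₀ : Tendsto y₀ l (𝓝 u)) {r : ℝ} (hr : 0 < r) :
    ∃ x, Tendsto (fun i => y i r) l (𝓝 x) := by
  obtain ⟨_, S⟩ := hS.exists
  have hκ := S.κ_pos
  set E := exp (4 * (b * exp (u + 1) * (κ + 2 + 2 / κ)) * r ^ 2)
  have hbound : Tendsto (fun p : ι × ι =>
      √(2 * (((κ * (y₀ p.1 - y₀ p.2)) ^ 2 + (a p.1 - a p.2) ^ 2) * E)) / κ) (l ×ˢ l) (𝓝 0) := by
    have hdy := ((hy₀.comp tendsto_fst).sub (hy₀.comp tendsto_snd)).const_mul κ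
    have hda := (ha.comp tendsto_fst).sub (ha.comp (tendsto_snd (f := l) (g := l)))
    simpa using (((((hdy.pow 2).add (hda.pow 2)).mul_const E).const_mul 2).sqrt).div_const κ
  refine exists_tendsto_of_tendsto_dist
    (squeeze_zero' (Eventually.of_forall fun _ => dist_nonneg) ?_ hbound)
  have hgood := hS.and (hy₀.eventually_le_const (lt_add_one u))
  filter_upwards [hgood.prod_mk hgood] with p hp
  obtain ⟨⟨S₁, hu₁⟩, S₂, hu₂⟩ := hp
  rw [le_div_iff₀' hκ, Real.dist_eq, ← abs_of_pos hκ, ← abs_mul, abs_of_pos hκ]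
  exact abs_le_sqrt (S₁.sq_mul_sub_le S₂ hu₁ hu₂ hr)

theorem tendsto_div_log_of_tendsto {g : ℝ → ℝ}
    (hS : ∀ᶠ i in l, LogRadialSystem κ (a i) b (y₀ i) (y i) (q i))
    (ha : Tendsto a l (𝓝 a')) (hy₀ : Tendsto y₀ l (𝓝 u))
    (hg : ∀ r, 1 < r → Tendsto (fun i => y i r) l (𝓝 (g r))) :
    Tendsto (fun r => r ^ 2 * exp (g r) / log r) atTop (𝓝 (2 * (κ - 2 * a') / b)) := by
  obtain ⟨K, hK⟩ := exists_abs_div_log_sub_le κ b (|u| + 1)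
  have hrate : Tendsto (fun r => K / √(log r)) atTop (𝓝 0) :=
    tendsto_const_nhds.div_atTop (tendsto_sqrt_atTop.comp tendsto_log_atTop)
  rw [tendsto_iff_norm_sub_tendsto_zero]
  refine squeeze_zero' (Eventually.of_forall fun _ => norm_nonneg _) ?_ hrate
  filter_upwards [eventually_ge_atTop (exp 1)] with r hr
  have hlim : Tendsto (fun i => ‖r ^ 2 * exp (y i r) / log r - 2 * (κ - 2 * a i) / b‖) l
      (𝓝 ‖r ^ 2 * exp (g r) / log r - 2 * (κ - 2 * a') / b‖) :=
    ((((hg r ((one_lt_exp_iff.2 one_pos).trans_le hr)).rexp.const_mul _).div_const _).sub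
      ((((ha.const_mul 2).const_sub κ).const_mul 2).div_const b)).norm
  refine le_of_tendsto hlim ?_
  filter_upwards [hS, hy₀.abs.eventually_le_const (lt_add_one |u|)] with i S hi
    using hK _ _ _ _ S hi r hr

end Family

theorem tendsto_div_log {κ a b y₀ : ℝ} {y q : ℝ → ℝ} (S : LogRadialSystem κ a b y₀ y q) :
    Tendsto (fun r => r ^ 2 * exp (y r) / log r) atTop (𝓝 (2 * (κ - 2 * a) / b)) :=
  tendsto_div_log_of_tendsto (l := pure ()) (Eventually.of_forall fun _ => S)
    tendsto_const_nhds tendsto_const_nhds fun _ _ => tendsto_const_nhds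

end LogRadialSystem

namespace IsRadialSol

variable {n : ℕ} {m α β η r : ℝ} {v : ℝ → ℝ}

lemma pos (h : IsRadialSol n m α β η v) (hr : 0 ≤ r) : 0 < v r := h.1 r hr

lemma tendsto_nhdsGT_zero (h : IsRadialSol n m α β η v) : Tendsto v (𝓝[>] 0) (𝓝 η) := by
  obtain ⟨-, hcont, -, -, rfl, -⟩ := h
  exact (hcont 0 self_mem_Ici).mono_left (nhdsWithin_mono _ Ioi_subset_Ici_self)

lemma hasDerivAt (h : IsRadialSol n m α β η v) (hr : 0 < r) : HasDerivAt v (deriv v r) r :=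
  ((h.2.2.1.differentiableOn two_ne_zero).differentiableAt (Ioi_mem_nhds hr)).hasDerivAt

lemma hasDerivAt_deriv (h : IsRadialSol n m α β η v) (hr : 0 < r) :
    HasDerivAt (deriv v) (deriv (deriv v) r) r := by
  have hderiv : ContDiffOn ℝ 1 (deriv v) (Ioi 0) :=
    h.2.2.1.deriv_of_isOpen isOpen_Ioi (by norm_num)
  exact ((hderiv.differentiableOn one_ne_zero).differentiableAt (Ioi_mem_nhds hr)).hasDerivAt

lemma deriv_rpow (h : IsRadialSol n m α β η v) (hr : 0 < r) :
    deriv (fun s => v s ^ m) r = m * v r ^ (m - 1) * deriv v r := by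
  rw [((h.hasDerivAt hr).rpow_const (Or.inl (h.pos hr.le).ne')).deriv]
  ring

lemma deriv_deriv_rpow (h : IsRadialSol n m α β η v) (hr : 0 < r) :
    deriv (deriv fun s => v s ^ m) r =
      m * v r ^ (m - 1) * ((m - 1) * deriv v r ^ 2 / v r + deriv (deriv v) r) := by
  have hv := (h.pos hr.le).ne'
  have heq : deriv (fun s => v s ^ m) =ᶠ[𝓝 r] fun s => m * v s ^ (m - 1) * deriv v s := by
    filter_upwards [Ioi_mem_nhds hr] with s hs using h.deriv_rpow hs
  have hderiv := (((h.hasDerivAt hr).rpow_const (p := m - 1) (Or.inl hv)).const_mul m).fun_mul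
    (h.hasDerivAt_deriv hr)
  rw [heq.deriv_eq, hderiv.deriv, rpow_sub_one hv (m - 1)]
  ring

lemma deriv_deriv_eq (h : IsRadialSol n m α β η v) (hn : n ≠ 1) (hm : m ≠ 0) (hr : 0 < r) :
    deriv (deriv v) r = (1 - m) * deriv v r ^ 2 / v r - (n - 1) / r * deriv v r -
      v r ^ (1 - m) * (α * v r + β * r * deriv v r) / (n - 1) := by
  have hn' : (n : ℝ) - 1 ≠ 0 := sub_ne_zero.2 (by exact_mod_cast hn)
  have hv := h.pos hr.le
  have hode := h.2.2.2.2.2 r hr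
  rw [h.deriv_deriv_rpow hr, h.deriv_rpow hr, ← neg_sub 1 m, rpow_neg hv.le] at hode
  have hP := (rpow_pos_of_pos hv (1 - m)).ne'
  have hv0 := hv.ne'
  generalize v r ^ (1 - m) = P at *
  field_simp at hode ⊢
  linear_combination hode

theorem logRadialSystem (h : IsRadialSol n m (2 * β / (1 - m)) β η v) (hn : 3 ≤ n) (hβ : 0 < β)
    (hm : m ∈ Ioo (0 : ℝ) ((n - 2) / n)) :
    LogRadialSystem (n - 2) (m / (1 - m)) (β / (n - 1)) ((1 - m) * log η)
      (fun r => (1 - m) * log (v r)) (fun r => -(1 - m) * (r * deriv v r / v r)) := by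
  have hn' : (3 : ℝ) ≤ n := by exact_mod_cast hn
  obtain ⟨hm0, hmn⟩ := hm
  rw [lt_div_iff₀ (by linarith)] at hmn
  have hm1 : 0 < 1 - m := by nlinarith
  have hn1 : (n : ℝ) - 1 ≠ 0 := by linarith
  have hη : 0 < η := h.2.2.2.2.1 ▸ h.pos le_rfl
  refine ⟨by positivity, ?_, div_pos hβ (by linarith), fun r hr => ?_, fun r hr => ?_, ?_⟩
  · rw [← mul_div_assoc, div_lt_iff₀ hm1]
    nlinarith
  · have hv := h.pos hr.le
    refine (((h.hasDerivAt hr).log hv.ne').const_mul (1 - m)).congr_deriv ?_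
    field_simp
  · have hv := h.pos hr.le
    refine ((((hasDerivAt_id r).fun_mul (h.hasDerivAt_deriv hr)).fun_div (h.hasDerivAt hr)
      hv.ne').const_mul (-(1 - m))).congr_deriv ?_
    rw [h.deriv_deriv_eq (by lia) hm0.ne' hr, forcing, mul_comm (1 - m) (log _),
      ← rpow_def_of_pos hv]
    simp only [id]
    field_simp
    ring
  · exact (h.tendsto_nhdsGT_zero.log hη.ne').const_mul _

lemma exp_mul_log (h : IsRadialSol n m α β η v) (hr : 0 ≤ r) :
    exp ((1 - m) * log (v r)) = v r ^ (1 - m) := by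
  rw [rpow_def_of_pos (h.pos hr), mul_comm]

end IsRadialSol

lemma tendsto_div_one_sub_nhdsGT_zero : Tendsto (fun m : ℝ => m / (1 - m)) (𝓝[>] 0) (𝓝 0) := by
  have : ContinuousAt (fun m : ℝ => m / (1 - m)) 0 := by fun_prop (disch := norm_num)
  simpa using this.tendsto.mono_left nhdsWithin_le_nhds

theorem stmt7 (n : ℕ) (hn : 3 ≤ n) (β η : ℝ) (hη : 0 < η) (hβ : 0 < β)
    (V : ℝ → ℝ → ℝ)
    (hV : ∀ m ∈ Set.Ioo (0:ℝ) (((n : ℝ) - 2) / n),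
      IsRadialSol n m (2 * β / (1 - m)) β η (V m)) :
    (∃ L : ℝ → ℝ,
      (∀ m ∈ Set.Ioo (0:ℝ) (((n : ℝ) - 2) / n),
        Tendsto (fun r : ℝ => r ^ 2 * V m r ^ (1 - m) / Real.log r) atTop
          (nhds (L m))) ∧
      Tendsto L (nhdsWithin (0:ℝ) (Set.Ioi (0:ℝ)))
        (nhds (2 * ((n : ℝ) - 1) * ((n : ℝ) - 2) / β))) ∧
    (∃ l : ℝ → ℝ,
      (∀ r : ℝ, 1 < r →
        Tendsto (fun m : ℝ => r ^ 2 * V m r ^ (1 - m) / Real.log r)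
          (nhdsWithin (0:ℝ) (Set.Ioi (0:ℝ))) (nhds (l r))) ∧
      Tendsto l atTop (nhds (2 * ((n : ℝ) - 1) * ((n : ℝ) - 2) / β))) := by
  have hn' : (3 : ℝ) ≤ n := by exact_mod_cast hn
  have S := fun m hm => (hV m hm).logRadialSystem hn hβ hm
  have hI : ∀ᶠ m in 𝓝[>] (0 : ℝ), m ∈ Ioo (0 : ℝ) ((n - 2) / n) :=
    Ioo_mem_nhdsGT (div_pos (by linarith) (by linarith))
  have ha := tendsto_div_one_sub_nhdsGT_zero
  have hvalue : 2 * ((n : ℝ) - 1) * (n - 2) / β = 2 * (n - 2 - 2 * 0) / (β / (n - 1)) := by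
    field_simp
    ring
  rw [hvalue]
  refine ⟨⟨_, fun m hm => ?_, (((ha.const_mul 2).const_sub _).const_mul 2).div_const _⟩, ?_⟩
  · refine (S m hm).tendsto_div_log.congr' ?_
    filter_upwards [eventually_ge_atTop 0] with r hr
    rw [(hV m hm).exp_mul_log hr]
  · have hy₀ : Tendsto (fun m : ℝ => (1 - m) * log η) (𝓝[>] 0) (𝓝 (log η)) := by
      have : Continuous fun m : ℝ => (1 - m) * log η := by fun_prop
      simpa using (this.tendsto 0).mono_left nhdsWithin_le_nhds
    choose! g hg using fun (r : ℝ) (hr : 1 < r) =>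
      LogRadialSystem.exists_tendsto_apply (hI.mono S) ha hy₀ (one_pos.trans hr)
    refine ⟨fun r => r ^ 2 * exp (g r) / log r, fun r hr => ?_,
      LogRadialSystem.tendsto_div_log_of_tendsto (hI.mono S) ha hy₀ hg⟩
    refine (((hg r hr).rexp.const_mul _).div_const _).congr' ?_
    filter_upwards [hI] with m hm
    rw [(hV m hm).exp_mul_log (by linarith)]
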